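/- Let T = (b_T,d_T,u_T) and C = (b_C,d_C,u_C) be Subjective Logic opinions, let W = T⊛C = (b_W,d_W,u_W), and suppose the projected direction α' is none of π/2, −π/3, 2π/3. Then d_W + u_W = d_T + u_T + r_C·b_T. -/

import Mathlib

/-- A Subjective Logic opinion: belief, disbelief, uncertainty. -/
def IsOpinion (b d u : ℝ) : Prop := 0 ≤ b ∧ 0 ≤ d ∧ 0 ≤ u ∧ b + d + u = 1

/-- The direction α_O of an opinion. -/
noncomputable def alphaO (b d u : ℝ) : ℝ :=
  if b = 1 then 0 else Real.arctan (Real.sqrt 3 * u / (2 * d + u))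

/-- The angle β_O of an opinion. -/
noncomputable def betaO (b d u : ℝ) : ℝ :=
  if d = 1 then Real.pi / 3 else Real.arctan (Real.sqrt 3 * u / (2 - 2 * d - u))

/-- The angle γ_O = π/3 − β_O. -/
noncomputable def gammaO (b d u : ℝ) : ℝ := Real.pi / 3 - betaO b d u

/-- The length |OU|. -/
noncomputable def distOU (b d u : ℝ) : ℝ := Real.sqrt ((1/3) * (1 + d - u)^2 + b^2)

/-- The angle δ_O. -/
noncomputable def deltaO (b d u : ℝ) : ℝ :=
  if u = 1 then 0 else Real.arcsin (b / distOU b d u)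

/-- The angle ε_O = π − γ_O − δ_O. -/
noncomputable def epsO (b d u : ℝ) : ℝ := Real.pi - gammaO b d u - deltaO b d u

/-- Cartesian x-coordinate of an opinion. -/
noncomputable def xO (d u : ℝ) : ℝ := (2 * d + u) / Real.sqrt 3

/-- Cartesian y-coordinate of an opinion. -/
noncomputable def yO (u : ℝ) : ℝ := u

/-- x-coordinate of the point M_O. -/
noncomputable def xM (b d u : ℝ) : ℝ :=
  (2 - yO u + Real.tan (alphaO b d u) * xO d u) / (Real.tan (alphaO b d u) + Real.sqrt 3)

/-- y-coordinate of the point M_O. -/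
noncomputable def yM (b d u : ℝ) : ℝ := -Real.sqrt 3 * xM b d u + 2

/-- The ratio r_O = |BO| / |BM_O|. -/
noncomputable def rO (b d u : ℝ) : ℝ :=
  Real.sqrt (xO d u ^ 2 + yO u ^ 2) / Real.sqrt (xM b d u ^ 2 + yM b d u ^ 2)

/-- The projected direction α' = (3/π)·α_C·ε_T − β_T. -/
noncomputable def alphaProj (bT dT uT bC dC uC : ℝ) : ℝ :=
  (3 / Real.pi) * alphaO bC dC uC * epsO bT dT uT - betaO bT dT uT

/-- The maximal length |TM_{C'}|. -/
noncomputable def Lmax (bT dT uT bC dC uC : ℝ) : ℝ :=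
  if alphaProj bT dT uT bC dC uC = Real.pi / 2 then 2 * bT
  else if alphaProj bT dT uT bC dC uC = -(Real.pi / 3) then (2 / Real.sqrt 3) * uT
  else if alphaProj bT dT uT bC dC uC = 2 * Real.pi / 3 then (2 / Real.sqrt 3) * (1 - uT)
  else (2 * Real.sqrt (Real.tan (alphaProj bT dT uT bC dC uC) ^ 2 + 1)
        / |Real.tan (alphaProj bT dT uT bC dC uC) + Real.sqrt 3|) * bT

/-- The length ℓ = |TC'| = r_C·|TM_{C'}|. -/
noncomputable def lenTC (bT dT uT bC dC uC : ℝ) : ℝ :=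
  rO bC dC uC * Lmax bT dT uT bC dC uC

/-- Uncertainty of the combination W = T⊛C. -/
noncomputable def uW (bT dT uT bC dC uC : ℝ) : ℝ :=
  uT + Real.sin (alphaProj bT dT uT bC dC uC) * lenTC bT dT uT bC dC uC

/-- Disbelief of the combination W = T⊛C. -/
noncomputable def dW (bT dT uT bC dC uC : ℝ) : ℝ :=
  dT + (uT - uW bT dT uT bC dC uC) * Real.cos (Real.pi / 3)
    + Real.cos (alphaProj bT dT uT bC dC uC) * Real.sin (Real.pi / 3)
      * lenTC bT dT uT bC dC uC

/-- Belief of the combination W = T⊛C. -/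
noncomputable def bW (bT dT uT bC dC uC : ℝ) : ℝ :=
  1 - dW bT dT uT bC dC uC - uW bT dT uT bC dC uC

theorem arctan_aux (x y : ℝ) (hx : 0 ≤ x) (hy : x ≤ y) :
    0 ≤ Real.arctan (Real.sqrt 3 * x / y) ∧ Real.arctan (Real.sqrt 3 * x / y) ≤ Real.pi / 3 := by
  have hs : 0 ≤ Real.sqrt 3 := Real.sqrt_nonneg 3
  constructor
  · rw [← Real.arctan_zero]
    apply Real.arctan_strictMono.monotone
    have : 0 ≤ y := hx.trans hy
    positivity
  · rw [← Real.arctan_sqrt_three]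
    apply Real.arctan_strictMono.monotone
    exact div_le_of_le_mul₀ (hx.trans hy) hs (mul_le_mul_of_nonneg_left hy hs)

theorem alphaProj_bounds (bT dT uT bC dC uC : ℝ)
    (hT : IsOpinion bT dT uT) (hC : IsOpinion bC dC uC) :
    -(Real.pi / 3) ≤ alphaProj bT dT uT bC dC uC ∧
      alphaProj bT dT uT bC dC uC ≤ 2 * Real.pi / 3 := by
  obtain ⟨hb, hd, hu, hs⟩ := hT
  obtain ⟨hb', hd', hu', hs'⟩ := hC
  have hpi := Real.pi_pos
  have hα : 0 ≤ alphaO bC dC uC ∧ alphaO bC dC uC ≤ Real.pi / 3 := by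
    unfold alphaO
    split_ifs
    · constructor <;> linarith
    · exact arctan_aux _ _ hu' (by linarith)
  have hβ : 0 ≤ betaO bT dT uT ∧ betaO bT dT uT ≤ Real.pi / 3 := by
    unfold betaO
    split_ifs
    · constructor <;> linarith
    · exact arctan_aux _ _ hu (by linarith)
  have hδ : 0 ≤ deltaO bT dT uT ∧ deltaO bT dT uT ≤ Real.pi / 2 := by
    unfold deltaO
    split_ifs
    · constructor <;> linarith
    · exact ⟨Real.arcsin_nonneg.2 (div_nonneg hb (Real.sqrt_nonneg _)), Real.arcsin_le_pi_div_two _⟩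
  have hε : 0 ≤ epsO bT dT uT := by
    unfold epsO gammaO
    linarith
  have hk0 : 0 ≤ 3 / Real.pi * alphaO bC dC uC := mul_nonneg (by positivity) hα.1
  have hk1 : 3 / Real.pi * alphaO bC dC uC ≤ 1 := by
    rw [div_mul_eq_mul_div, div_le_one hpi]
    linarith
  have h1 := mul_nonneg hk0 hε
  have h2 := mul_le_mul_of_nonneg_right hk1 hε
  have h3 : epsO bT dT uT = Real.pi - (Real.pi / 3 - betaO bT dT uT) - deltaO bT dT uT := rfl
  unfold alphaProj
  constructor <;> linarith

theorem length_aux (a : ℝ) (hc : Real.cos a ≠ 0)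
    (hp : 0 < Real.sin a + Real.sqrt 3 * Real.cos a) :
    2 * Real.sqrt (Real.tan a ^ 2 + 1) / |Real.tan a + Real.sqrt 3|
      = 2 / (Real.sin a + Real.sqrt 3 * Real.cos a) := by
  have h1 : Real.tan a ^ 2 + 1 = (1 / Real.cos a) ^ 2 := by
    rw [Real.tan_eq_sin_div_cos]
    field_simp
    exact Real.sin_sq_add_cos_sq a
  have h2 : Real.tan a + Real.sqrt 3
      = (Real.sin a + Real.sqrt 3 * Real.cos a) / Real.cos a := by
    rw [Real.tan_eq_sin_div_cos]
    field_simp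
  rw [h1, h2, Real.sqrt_sq_eq_abs, abs_div, abs_div, abs_one, abs_of_pos hp]
  have : |Real.cos a| ≠ 0 := abs_ne_zero.2 hc
  field_simp

/-- If the projected direction α' is none of π/2, −π/3, 2π/3, then the combination
W = T⊛C satisfies d_W + u_W = d_T + u_T + r_C·b_T. -/
theorem stmt12 (bT dT uT bC dC uC : ℝ)
    (hT : IsOpinion bT dT uT) (hC : IsOpinion bC dC uC)
    (h1 : alphaProj bT dT uT bC dC uC ≠ Real.pi / 2)
    (h2 : alphaProj bT dT uT bC dC uC ≠ -(Real.pi / 3))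
    (h3 : alphaProj bT dT uT bC dC uC ≠ 2 * Real.pi / 3) :
    dW bT dT uT bC dC uC + uW bT dT uT bC dC uC = dT + uT + rO bC dC uC * bT := by
  obtain ⟨hlo, hhi⟩ := alphaProj_bounds bT dT uT bC dC uC hT hC
  have hpi := Real.pi_pos
  unfold dW uW lenTC Lmax
  rw [if_neg h1, if_neg h2, if_neg h3]
  generalize alphaProj bT dT uT bC dC uC = a at *
  have hlo' : -(Real.pi / 3) < a := lt_of_le_of_ne hlo (Ne.symm h2)
  have hhi' : a < 2 * Real.pi / 3 := lt_of_le_of_ne hhi h3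
  have hc : Real.cos a ≠ 0 := by
    rcases lt_or_gt_of_ne h1 with h | h
    · exact (Real.cos_pos_of_mem_Ioo ⟨by linarith, h⟩).ne'
    · exact (Real.cos_neg_of_pi_div_two_lt_of_lt h (by linarith)).ne
  have hsin : 0 < Real.sin (a + Real.pi / 3) :=
    Real.sin_pos_of_pos_of_lt_pi (by linarith) (by linarith)
  rw [Real.sin_add, Real.cos_pi_div_three, Real.sin_pi_div_three] at hsin
  have hp : 0 < Real.sin a + Real.sqrt 3 * Real.cos a := by linarith
  rw [length_aux a hc hp, Real.cos_pi_div_three, Real.sin_pi_div_three]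
  have hne := hp.ne'
  field_simp
  ring
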